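/- arXiv:1807.10812 — 3 statements merged into one kernel-verified Lean document; each statement's English description precedes it below -/
import Mathlib

section
/- Let p be a prime and let f ∈ ℤ[[t]] be a formal power series with integer coefficients. If the image of f in ℚ_p[[t]] is the expansion of a rational function (i.e. there exist polynomials g, h ∈ ℚ_p[t] with h ≠ 0 and h·f = g in ℚ_p[[t]]), then f is the expansion of a rational function over ℚ (there exist g′, h′ ∈ ℚ[t] with h′ ≠ 0 and h′·f = g′ in ℚ[[t]]). In other words, ℤ[[t]] ∩ ℚ_p(t) ⊆ ℚ(t). -/
/-!
Suppose `h * f = g` with `g`, `h` polynomials over an `R`-algebra `A` and `f` a power series over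
`R`. An `R`-linear functional `φ : A → R` applied to every coefficient is linear over `R⟦X⟧`, so
`φ h * f = φ g`. If `A` is projective over `R`, for instance if `R` is a field, then some `φ` does
not kill the leading coefficient of `h`, so the new denominator `φ h` is nonzero. For `ℤ⟦t⟧` this
is applied with `R = ℚ` and `A = ℚ_p`, and linear functionals replace the Hankel determinants.
-/

open scoped Polynomial PowerSeries

section CoefficientwiseLinearMap

variable {R A B : Type*} [CommSemiring R] [Semiring A] [Algebra R A] [Semiring B] [Algebra R B]

/-- The map of polynomials that applies an `R`-linear map to every coefficient. Unlike
`Polynomial.map` it does not require a ring homomorphism, and it is not multiplicative. -/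
noncomputable def polynomialMapCoeffs (φ : A →ₗ[R] B) : A[X] →ₗ[R] B[X] :=
  Polynomial.lsum fun n => (Polynomial.monomial n).restrictScalars R ∘ₗ φ

/-- The map of power series that applies an `R`-linear map to every coefficient: the extension of
`polynomialMapCoeffs` to power series. -/
noncomputable def powerSeriesMapCoeffs (φ : A →ₗ[R] B) (s : A⟦X⟧) : B⟦X⟧ :=
  PowerSeries.mk fun n => φ (PowerSeries.coeff n s)

@[simp]
theorem coeff_polynomialMapCoeffs (φ : A →ₗ[R] B) (q : A[X]) (n : ℕ) :
    (polynomialMapCoeffs φ q).coeff n = φ (q.coeff n) := by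
  simp +contextual [polynomialMapCoeffs, Polynomial.lsum_apply, Polynomial.sum_def,
    Polynomial.coeff_monomial]

@[simp]
theorem coeff_powerSeriesMapCoeffs (φ : A →ₗ[R] B) (s : A⟦X⟧) (n : ℕ) :
    PowerSeries.coeff n (powerSeriesMapCoeffs φ s) = φ (PowerSeries.coeff n s) :=
  PowerSeries.coeff_mk _ _

theorem coe_polynomialMapCoeffs (φ : A →ₗ[R] B) (q : A[X]) :
    (polynomialMapCoeffs φ q : B⟦X⟧) = powerSeriesMapCoeffs φ q := by
  ext n
  simp only [Polynomial.coeff_coe, coeff_polynomialMapCoeffs, coeff_powerSeriesMapCoeffs]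

theorem powerSeriesMapCoeffs_mul_map_algebraMap (φ : A →ₗ[R] B) (s : A⟦X⟧) (f : R⟦X⟧) :
    powerSeriesMapCoeffs φ (s * f.map (algebraMap R A)) =
      powerSeriesMapCoeffs φ s * f.map (algebraMap R B) := by
  ext n
  simp only [coeff_powerSeriesMapCoeffs, PowerSeries.coeff_mul, PowerSeries.coeff_map, map_sum,
    ← Algebra.commutes, ← Algebra.smul_def, map_smul]

theorem exists_dual_polynomialMapCoeffs_ne_zero [Module.Projective R A] {h : A[X]} (hh : h ≠ 0) :
    ∃ φ : Module.Dual R A, polynomialMapCoeffs φ h ≠ 0 := by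
  obtain ⟨φ, hφ⟩ := Module.Projective.exists_dual_ne_zero R (Polynomial.leadingCoeff_ne_zero.mpr hh)
  refine ⟨φ, fun hzero => hφ ?_⟩
  rw [Polynomial.leadingCoeff, ← coeff_polynomialMapCoeffs, hzero, Polynomial.coeff_zero]

end CoefficientwiseLinearMap

/-- A power series is rational if it is the expansion of a quotient `g / h` of polynomials, written
without division as `h * f = g`. The only condition on `h` is `h ≠ 0`, so this is the usual notion
when `R` is a commutative domain. -/
def IsRationalPowerSeries {R : Type*} [Semiring R] (f : R⟦X⟧) : Prop :=
  ∃ g h : R[X], h ≠ 0 ∧ (h : R⟦X⟧) * f = (g : R⟦X⟧)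

theorem int_powerSeries_rational_of_padic_rational_general {R A : Type*} [CommSemiring R]
    [Semiring A] [Algebra R A] [Module.Projective R A] {f : R⟦X⟧}
    (hf : IsRationalPowerSeries (f.map (algebraMap R A))) : IsRationalPowerSeries f := by
  obtain ⟨g, h, h_ne_zero, h_mul_f⟩ := hf
  obtain ⟨φ, φh_ne_zero⟩ := exists_dual_polynomialMapCoeffs_ne_zero (R := R) h_ne_zero
  refine ⟨polynomialMapCoeffs φ g, polynomialMapCoeffs φ h, φh_ne_zero, ?_⟩
  calc (polynomialMapCoeffs φ h : R⟦X⟧) * f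
      = powerSeriesMapCoeffs φ h * f.map (algebraMap R R) := by
        rw [coe_polynomialMapCoeffs, Algebra.algebraMap_self, PowerSeries.map_id, id]
    _ = powerSeriesMapCoeffs φ (h * f.map (algebraMap R A)) :=
        (powerSeriesMapCoeffs_mul_map_algebraMap φ h f).symm
    _ = (polynomialMapCoeffs φ g : R⟦X⟧) := by
        rw [h_mul_f, coe_polynomialMapCoeffs]

/-- **`ℤ[[t]] ∩ ℚ_p(t) ⊆ ℚ(t)`**.
If a power series with integer coefficients is the expansion of a rational function
over the `p`-adic numbers `ℚ_p`, then it is the expansion of a rational function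
over `ℚ`. -/
theorem int_powerSeries_rational_of_padic_rational
    (p : ℕ) [Fact p.Prime] (f : PowerSeries ℤ)
    (h : ∃ g h : Polynomial ℚ_[p], h ≠ 0 ∧
      (h : PowerSeries ℚ_[p]) * f.map (Int.castRingHom ℚ_[p]) = (g : PowerSeries ℚ_[p])) :
    ∃ g' h' : Polynomial ℚ, h' ≠ 0 ∧
      (h' : PowerSeries ℚ) * f.map (Int.castRingHom ℚ) = (g' : PowerSeries ℚ) := by
  refine int_powerSeries_rational_of_padic_rational_general (A := ℚ_[p]) ?_
  rwa [← RingHom.comp_apply, ← PowerSeries.map_comp,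
    RingHom.ext_int (RingHom.comp _ _) (Int.castRingHom ℚ_[p])]
end

section
/- Let F be a field, Q ≥ 1 an integer, and (δ_j)_{1≤j≤Q}, (ε_j)_{1≤j≤Q} two families of nonzero elements of F. Let K be a finite set of natural numbers, each ≠ 1. Suppose that for all sufficiently large n not divisible by any k ∈ K, the multiset {δ_1^n, …, δ_Q^n} equals the multiset {ε_1^n, …, ε_Q^n}. Then the multiset {δ_1, …, δ_Q} equals the multiset {ε_1, …, ε_Q}. -/
/-!
For `x ≠ 0` the exponents `n` with `x ^ n = y ^ n` are closed under addition and, by cancellation,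
under subtraction, so they are the multiples of some `d`; if `x ≠ y` then `d ≠ 1`, and no prime
other than `d` is such an exponent. Hence raising to a large prime exponent is injective on the
finitely many elements involved, and since a large prime is divisible by no `k ∈ K`, the hypothesis
supplies an exponent at which the powers determine the multiset.
-/

open Filter

theorem exists_pow_eq_pow_iff_dvd {M : Type*} [MonoidWithZero M] [IsLeftCancelMulZero M]
    {x : M} (hx : x ≠ 0) (y : M) : ∃ d : ℕ, ∀ n : ℕ, x ^ n = y ^ n ↔ d ∣ n := by
  let S : AddSubmonoid ℕ :=
    { carrier := {n | x ^ n = y ^ n}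
      zero_mem' := by simp
      add_mem' := fun {m n} (hm : x ^ m = y ^ m) (hn : x ^ n = y ^ n) ↦
        show x ^ (m + n) = y ^ (m + n) by rw [pow_add, pow_add, hm, hn] }
  have mem_of_add_mem {m n : ℕ} (hm : x ^ m = y ^ m) (hmn : x ^ (m + n) = y ^ (m + n)) :
      x ^ n = y ^ n := by
    rw [pow_add, pow_add, ← hm] at hmn
    exact mul_left_cancel₀ (pow_ne_zero m hx) hmn
  let d := Nat.setGcd (S : Set ℕ)
  obtain ⟨N, hN⟩ := Nat.exists_mem_closure_of_ge (S : Set ℕ)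
  have large_multiple_mem {m : ℕ} (hm : N ≤ m) (hdm : d ∣ m) : x ^ m = y ^ m := by
    have := hN m hm hdm
    rwa [AddSubmonoid.closure_eq] at this
  refine ⟨d, fun n ↦ ⟨fun hn ↦ Nat.setGcd_dvd_of_mem hn, fun hdn ↦ ?_⟩⟩
  rcases Nat.eq_zero_or_pos n with rfl | hn
  · simp
  have hNn : N ≤ n * N := Nat.le_mul_of_pos_left N hn
  have hdnN : d ∣ n * N := hdn.mul_right N
  exact mem_of_add_mem (large_multiple_mem hNn hdnN)
    (large_multiple_mem (hNn.trans (Nat.le_add_right _ _)) (dvd_add hdnN hdn))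

theorem eventually_prime_not_dvd {k : ℕ} (hk : k ≠ 1) : ∀ᶠ p : ℕ in atTop, p.Prime → ¬ k ∣ p := by
  filter_upwards [eventually_ne_atTop k] with p hpk hp hkp
  exact ((Nat.dvd_prime hp).1 hkp).elim hk hpk.symm

theorem eventually_prime_eq_of_pow_eq_pow {M : Type*} [MonoidWithZero M] [IsLeftCancelMulZero M]
    (x y : M) : ∀ᶠ p : ℕ in atTop, p.Prime → x ^ p = y ^ p → x = y := by
  rcases eq_or_ne x 0 with rfl | hx
  · refine .of_forall fun p hp h ↦ ?_
    rw [zero_pow hp.ne_zero] at h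
    exact (eq_zero_of_pow_eq_zero h.symm).symm
  obtain ⟨d, hd⟩ := exists_pow_eq_pow_iff_dvd hx y
  rcases eq_or_ne d 1 with rfl | hd1
  · have hxy : x = y := by simpa only [pow_one] using (hd 1).2 dvd_rfl
    exact .of_forall fun _ _ _ ↦ hxy
  filter_upwards [eventually_prime_not_dvd hd1] with p hdp hp h
  exact absurd ((hd p).1 h) (hdp hp)

theorem multiset_eq_of_map_eq_map {α β : Type*} {f : α → β} {s t : Multiset α}
    (hf : ∀ x ∈ s, ∀ y ∈ t, f x = f y → x = y) (h : s.map f = t.map f) : s = t := by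
  rw [← Multiset.rel_eq, Multiset.rel_map] at h
  exact Multiset.rel_eq.1 (h.mono hf)

theorem multiset_eq_of_frequently_prime_map_pow_eq {M : Type*} [MonoidWithZero M]
    [IsLeftCancelMulZero M] {s t : Multiset M}
    (h : ∃ᶠ p : ℕ in atTop, p.Prime ∧ s.map (· ^ p) = t.map (· ^ p)) : s = t := by
  have hinj : ∀ᶠ p : ℕ in atTop, ∀ x ∈ s, ∀ y ∈ t, p.Prime → x ^ p = y ^ p → x = y :=
    (eventually_all_finite s.finite_toSet).2 fun x _ ↦
      (eventually_all_finite t.finite_toSet).2 fun y _ ↦ eventually_prime_eq_of_pow_eq_pow x y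
  obtain ⟨p, ⟨hp, hst⟩, hinj⟩ := (h.and_eventually hinj).exists
  exact multiset_eq_of_map_eq_map (fun x hx y hy ↦ hinj x hx y hy hp) hst

theorem multiset_eq_of_pow_multiset_eq_general {M : Type*} [MonoidWithZero M]
    [IsLeftCancelMulZero M] {s t : Multiset M} (K : Finset ℕ) (hK : ∀ k ∈ K, k ≠ 1)
    (h : ∀ᶠ n : ℕ in atTop, (∀ k ∈ K, ¬ k ∣ n) → s.map (· ^ n) = t.map (· ^ n)) : s = t := by
  have hndvd : ∀ᶠ p : ℕ in atTop, ∀ k ∈ K, p.Prime → ¬ k ∣ p :=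
    (eventually_all_finset K).2 fun k hk ↦ eventually_prime_not_dvd (hK k hk)
  have hprime : ∃ᶠ p : ℕ in atTop, p.Prime := frequently_atTop.2 Nat.exists_infinite_primes
  refine multiset_eq_of_frequently_prime_map_pow_eq ?_
  refine (hprime.and_eventually (hndvd.and h)).mono ?_
  rintro p ⟨hp, hpK, hst⟩
  exact ⟨hp, hst fun k hk ↦ hpK k hk hp⟩

/-- **Recovering a family from its power families** (Lemma 12).
Let `δ`, `ε` be two families of `Q ≥ 1` nonzero elements of a field `F` and `K` a
finite set of naturals, none equal to `1`.  If for all sufficiently large `n` not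
divisible by any `k ∈ K` the multisets `{δⱼⁿ}` and `{εⱼⁿ}` coincide, then the
multisets `{δⱼ}` and `{εⱼ}` coincide. -/
theorem multiset_eq_of_pow_multiset_eq
    (F : Type) [Field F] (Q : ℕ) (hQ : 1 ≤ Q)
    (δ ε : Fin Q → F)
    (hδ : ∀ j, δ j ≠ 0) (hε : ∀ j, ε j ≠ 0)
    (K : Finset ℕ) (hK : ∀ k ∈ K, k ≠ 1)
    (h : ∃ n₀ : ℕ, ∀ n : ℕ, n₀ ≤ n → (∀ k ∈ K, ¬ k ∣ n) →
      Multiset.map (fun j => δ j ^ n) Finset.univ.val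
        = Multiset.map (fun j => ε j ^ n) Finset.univ.val) :
    Multiset.map δ Finset.univ.val = Multiset.map ε Finset.univ.val := by
  refine multiset_eq_of_pow_multiset_eq_general K hK (eventually_atTop.2 ?_)
  simpa only [Multiset.map_map, Function.comp_def] using h
end

section
/- Let k be a field, V a k-vector space, B : V × V → k a bilinear form, S a nonempty set, and for each s ∈ S let δ_s ∈ V be a nonzero vector and ε_s ∈ {1,−1}. Define T_s(x) = x + ε_s·B(x,δ_s)·δ_s, assume each T_s is bijective, let G ≤ GL(V) be generated by the T_s, and let E = span{δ_s : s ∈ S}. Assume moreover that the vanishing cycles are conjugate up to sign: for all s, s′ ∈ S there exists g ∈ G with g·δ_s = δ_{s′} or g·δ_s = −δ_{s′}. Then every G-stable subspace F of E either is contained in E ∩ E^⊥ or equals E, where E^⊥ = {x ∈ V : B(x,δ_s) = 0 for all s ∈ S}. -/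
/-!
A subspace stable under the transvection `x ↦ x + f x • v` is contained in `ker f` or contains `v`.
Hence a stable subspace that is not orthogonal to every vanishing cycle contains one of them,
and with it the span of its orbit, which by conjugacy contains all the others.
-/

section Transvection

open LinearMap Module

theorem mem_invtSubmodule_transvection_iff {k V : Type*} [DivisionRing k] [AddCommGroup V]
    [Module k V] {f : Dual k V} {v : V} {F : Submodule k V} :
    F ∈ End.invtSubmodule (transvection f v) ↔ F ≤ ker f ∨ v ∈ F := by
  have transvection_mem_iff {x : V} (hx : x ∈ F) : transvection f v x ∈ F ↔ f x = 0 ∨ v ∈ F := by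
    rw [transvection.apply, F.add_mem_iff_right hx, or_iff_not_imp_left]
    refine ⟨fun h hfx ↦ (F.smul_mem_iff hfx).mp h, fun h ↦ ?_⟩
    by_cases hfx : f x = 0
    · simp [hfx]
    · exact F.smul_mem _ (h hfx)
  rw [End.mem_invtSubmodule_iff_forall_mem_of_mem, forall₂_congr @transvection_mem_iff]
  simp only [SetLike.le_def, mem_ker, ← forall_or_right]

theorem id_add_smul_smulRight_eq_transvection {R V : Type*} [CommSemiring R] [AddCommMonoid V]
    [Module R V] (c : R) (f : Dual R V) (v : V) :
    LinearMap.id + c • smulRight f v = transvection (c • f) v := by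
  ext x
  simp [transvection.apply, mul_smul]

end Transvection

theorem span_image_apply_le_of_mem_invtSubmodule {R V : Type*} [Semiring R] [AddCommMonoid V]
    [Module R V] {A : Set (Module.End R V)} {F : Submodule R V}
    (hF : ∀ φ ∈ A, F ∈ φ.invtSubmodule) {v : V} (hv : v ∈ F) :
    Submodule.span R ((fun φ ↦ φ v) '' A) ≤ F :=
  Submodule.span_le.mpr (Set.forall_mem_image.mpr fun φ hφ ↦ hF φ hφ hv)

theorem mem_span_image_apply_of_eq_or_eq_neg {R V : Type*} [Ring R] [AddCommGroup V] [Module R V]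
    {A : Set (Module.End R V)} {v w : V} (h : ∃ φ ∈ A, φ v = w ∨ φ v = -w) :
    w ∈ Submodule.span R ((fun φ ↦ φ v) '' A) := by
  obtain ⟨φ, hφ, hφv⟩ := h
  have hmem : φ v ∈ Submodule.span R ((fun φ ↦ φ v) '' A) :=
    Submodule.subset_span (Set.mem_image_of_mem _ hφ)
  rcases hφv with hφv | hφv <;> simpa only [hφv, neg_mem_iff] using hmem

theorem monodromy_irreducible_on_vanishing_part_general {k V S : Type*} [DivisionRing k]
    [AddCommGroup V] [Module k V] {f : S → Module.Dual k V} {δ : S → V}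
    {A : Set (Module.End k V)} (hA : ∀ s, LinearMap.transvection (f s) (δ s) ∈ A)
    (hgen : ∀ s s', δ s' ∈ Submodule.span k ((fun φ ↦ φ (δ s)) '' A))
    {F : Submodule k V} (hF : ∀ φ ∈ A, F ∈ φ.invtSubmodule) :
    F ≤ ⨅ s, LinearMap.ker (f s) ∨ Submodule.span k (Set.range δ) ≤ F := by
  rw [le_iInf_iff, or_iff_not_imp_left, not_forall]
  rintro ⟨s, hs⟩
  have hδs : δ s ∈ F := (mem_invtSubmodule_transvection_iff.mp (hF _ (hA s))).resolve_left hs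
  rw [Submodule.span_le, Set.range_subset_iff]
  exact fun s' ↦ span_image_apply_le_of_mem_invtSubmodule hF hδs (hgen s s')

/-- **Irreducibility of the monodromy action on `E/(E ∩ E^⊥)`** (Corollary 3, abstract
form).  With `G` the group generated by the transvections
`T_s(x) = x + ε_s·B(x, δ_s)·δ_s` and `E` the span of the nonzero vectors `δ_s`
(`S ≠ ∅`), if the `δ_s` are `G`-conjugate up to sign, then every `G`-stable subspace
`F ⊆ E` is contained in `E ∩ E^⊥` or equals `E`, where
`E^⊥ = {x | B(x, δ_s) = 0 ∀ s}`. -/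
theorem monodromy_irreducible_on_vanishing_part
    (k : Type) [Field k] (V : Type) [AddCommGroup V] [Module k V]
    (B : V →ₗ[k] V →ₗ[k] k)
    (S : Type) [Nonempty S] (δ : S → V) (hδ : ∀ s, δ s ≠ 0)
    (ε : S → k) (hε : ∀ s, ε s = 1 ∨ ε s = -1)
    (T : S → (V →ₗ[k] V))
    (hT : ∀ s, T s = LinearMap.id + ε s • LinearMap.smulRight (B.flip (δ s)) (δ s))
    (hbij : ∀ s, Function.Bijective (T s))
    (G : Subgroup (V ≃ₗ[k] V))
    (hG : G = Subgroup.closure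
      (Set.range fun s => LinearEquiv.ofBijective (T s) (hbij s)))
    (E : Submodule k V) (hE : E = Submodule.span k (Set.range δ))
    (Eperp : Submodule k V) (hEperp : Eperp = ⨅ s, LinearMap.ker (B.flip (δ s)))
    (hconj : ∀ s s' : S, ∃ g ∈ G, g (δ s) = δ s' ∨ g (δ s) = -δ s') :
    ∀ F : Submodule k V, F ≤ E → (∀ g ∈ G, ∀ x ∈ F, g x ∈ F) →
      F ≤ E ⊓ Eperp ∨ F = E := by
  subst hE hEperp
  intro F hFE hF
  let A : Set (Module.End k V) := (fun g : V ≃ₗ[k] V ↦ (g : V →ₗ[k] V)) '' G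
  have hA (s : S) : LinearMap.transvection (ε s • B.flip (δ s)) (δ s) ∈ A :=
    ⟨_, hG.ge (Subgroup.subset_closure (Set.mem_range_self s)),
      (hT s).trans (id_add_smul_smulRight_eq_transvection _ _ _)⟩
  have hgen (s s' : S) : δ s' ∈ Submodule.span k ((fun φ ↦ φ (δ s)) '' A) :=
    mem_span_image_apply_of_eq_or_eq_neg (Set.exists_mem_image.mpr (hconj s s'))
  have hker (s : S) : LinearMap.ker (ε s • B.flip (δ s)) = LinearMap.ker (B.flip (δ s)) :=
    LinearMap.ker_smul _ _ (by rcases hε s with h | h <;> simp [h])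
  have hdichotomy :=
    monodromy_irreducible_on_vanishing_part_general hA hgen (Set.forall_mem_image.mpr hF)
  simp only [hker] at hdichotomy
  exact hdichotomy.imp (le_inf hFE) (le_antisymm hFE)
end
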